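/- arXiv:1902.01751 — 2 statements merged into one kernel-verified Lean document; each statement's English description precedes it below -/
import Mathlib

section
/- For the weight a = (3,8,12) (the weight of the E₁₄-singularity), there exist 3×3 matrices C and D with non-negative integer entries such that |det D| = 1, B_a = C·D, (3,8,12) = (1,1,1)·D, f_C(x,y,z) = x³ + y⁴ + yz² after a permutation of the variables (x,y,z) (the normal form of the strange dual singularity Q₁₀), and f_C has an isolated critical point at the origin of ℂ³ (all partial derivatives of f_C vanish at 0, and there is a punctured neighborhood of 0 containing no critical point of f_C). -/
open Matrix BigOperators

noncomputable section

/-- `f_C(x,y,z) = Σ_{i=1}^{3} x^{c_{i1}} y^{c_{i2}} z^{c_{i3}}` for a 3×3 matrix `C`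
with non-negative integer entries. -/
def fC (C : Matrix (Fin 3) (Fin 3) ℕ) : (Fin 3 → ℂ) → ℂ :=
  fun v => ∑ i : Fin 3, ∏ j : Fin 3, v j ^ C i j

/-- `φ_D(u₁,u₂,u₃) = (u₁^{d_{i1}} u₂^{d_{i2}} u₃^{d_{i3}})_{i=1}^{3}`. -/
def phiD (D : Matrix (Fin 3) (Fin 3) ℕ) : (Fin 3 → ℂ) → (Fin 3 → ℂ) :=
  fun u i => ∏ j : Fin 3, u j ^ D i j

/-- The matrix `B_a` with rows `(a₁+1,a₂,a₃)`, `(a₁,a₂+1,a₃)`, `(a₁,a₂,a₃+1)`. -/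
def Bmat (a : Fin 3 → ℕ) : Matrix (Fin 3) (Fin 3) ℕ :=
  fun i j => a j + if i = j then 1 else 0

/-- `G_a(u₁,u₂,u₃) = u₁^{a₁+1}u₂^{a₂}u₃^{a₃} + u₁^{a₁}u₂^{a₂+1}u₃^{a₃} + u₁^{a₁}u₂^{a₂}u₃^{a₃+1}`. -/
def Ga (a : Fin 3 → ℕ) : (Fin 3 → ℂ) → ℂ :=
  fun u => u 0 ^ (a 0 + 1) * u 1 ^ a 1 * u 2 ^ a 2
         + u 0 ^ a 0 * u 1 ^ (a 1 + 1) * u 2 ^ a 2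
         + u 0 ^ a 0 * u 1 ^ a 1 * u 2 ^ (a 2 + 1)

/-- `H_a(u₁,u₂,u₃) = u₁^{a₁}u₂^{a₂}u₃^{a₃}`. -/
def Ha (a : Fin 3 → ℕ) : (Fin 3 → ℂ) → ℂ :=
  fun u => u 0 ^ a 0 * u 1 ^ a 1 * u 2 ^ a 2

/-- Determinant of a matrix of natural numbers, computed over `ℤ`. -/
def detZ (M : Matrix (Fin 3) (Fin 3) ℕ) : ℤ :=
  (M.map (fun n : ℕ => (n : ℤ))).det

/-- `f` has an isolated critical point at the origin of `ℂ³`: the derivative of `f`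
vanishes at `0`, and there is a punctured neighborhood of `0` containing no critical
point of `f`. -/
def IsolatedCriticalAtZero (f : (Fin 3 → ℂ) → ℂ) : Prop :=
  fderiv ℂ f 0 = 0 ∧
  ∃ ε : ℝ, ε > 0 ∧ ∀ p : Fin 3 → ℂ, p ≠ 0 → ‖p‖ < ε → fderiv ℂ f p ≠ 0

/-!
If `B_a = C * D` and the columns of `D` sum to `a`, then `B_a = 1 + J * D` with `J` the all-ones
matrix, so `(C - J) * D = 1` over `ℤ`. Thus `C` determines `D = (C - J)⁻¹`, and `D` is unimodular.
For `a = (3, 8, 12)`, the exponent matrix with rows `y ^ 4`, `x ^ 3`, `y * z ^ 2` gives a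
non-negative such `D`. The critical equations of the resulting polynomial force first `x = 0`, and
then `y = 0` and `z = 0`, because `4 * y ^ 3 + z ^ 2 = 0` makes each of `y`, `z` vanish with the
other while `y * z = 0`.
-/

theorem sub_allOnes_mul_eq_one_of_Bmat_eq_mul {a : Fin 3 → ℕ} {C D : Matrix (Fin 3) (Fin 3) ℕ}
    (hB : Bmat a = C * D) (ha : ∀ j, ∑ i, D i j = a j) :
    (C.map (fun n : ℕ => (n : ℤ)) - of fun _ _ => 1) * D.map (fun n : ℕ => (n : ℤ)) = 1 := by
  ext i j
  have hentry : ((a j + if i = j then 1 else 0 : ℕ) : ℤ) = ∑ k, (C i k : ℤ) * D k j := by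
    exact_mod_cast congr_fun₂ hB i j
  have hsum : ∑ k, (D k j : ℤ) = a j := by exact_mod_cast ha j
  simp only [mul_apply, Matrix.sub_apply, map_apply, of_apply, sub_mul, one_mul,
    Finset.sum_sub_distrib, hsum, ← hentry, one_apply]
  push_cast
  ring

theorem abs_detZ_eq_one_of_Bmat_eq_mul {a : Fin 3 → ℕ} {C D : Matrix (Fin 3) (Fin 3) ℕ}
    (hB : Bmat a = C * D) (ha : ∀ j, ∑ i, D i j = a j) : |detZ D| = 1 :=
  Int.isUnit_iff_abs_eq.mp <| (isUnit_iff_isUnit_det _).mp <|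
    .of_mul_eq_one_right _ (sub_allOnes_mul_eq_one_of_Bmat_eq_mul hB ha)

theorem hasFDerivAt_fC (C : Matrix (Fin 3) (Fin 3) ℕ) (p : Fin 3 → ℂ) :
    HasFDerivAt (fC C)
      (∑ i, ∑ j, (∏ k ∈ Finset.univ.erase j, p k ^ C i k) •
        (C i j * p j ^ (C i j - 1)) • (ContinuousLinearMap.proj j : (Fin 3 → ℂ) →L[ℂ] ℂ)) p := by
  have hpow (i j : Fin 3) : HasFDerivAt (fun v : Fin 3 → ℂ => v j ^ C i j)
      ((C i j * p j ^ (C i j - 1)) • (ContinuousLinearMap.proj j : (Fin 3 → ℂ) →L[ℂ] ℂ)) p := by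
    simpa using (hasFDerivAt_apply (𝕜 := ℂ) j p).pow (C i j)
  exact .fun_sum fun i _ => .finsetProd fun j _ => hpow i j

theorem fderiv_fC_single (C : Matrix (Fin 3) (Fin 3) ℕ) (p : Fin 3 → ℂ) (j : Fin 3) :
    fderiv ℂ (fC C) p (Pi.single j 1) =
      ∑ i, (∏ k ∈ Finset.univ.erase j, p k ^ C i k) * (C i j * p j ^ (C i j - 1)) := by
  simp [(hasFDerivAt_fC C p).fderiv, Pi.single_apply]

theorem fderiv_fC_eq_zero_iff (C : Matrix (Fin 3) (Fin 3) ℕ) (p : Fin 3 → ℂ) :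
    fderiv ℂ (fC C) p = 0 ↔
      ∀ j, ∑ i, (∏ k ∈ Finset.univ.erase j, p k ^ C i k) * (C i j * p j ^ (C i j - 1)) = 0 := by
  simp_rw [← fderiv_fC_single]
  refine ⟨fun h j => by simp [h], fun h => ?_⟩
  exact ContinuousLinearMap.coe_injective <|
    LinearMap.pi_ext' fun j => LinearMap.ext_ring (by simpa using h j)

theorem IsolatedCriticalAtZero.of_fderiv_eq_zero_iff {f : (Fin 3 → ℂ) → ℂ}
    (hf : ∀ p, fderiv ℂ f p = 0 ↔ p = 0) : IsolatedCriticalAtZero f :=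
  ⟨(hf 0).mpr rfl, 1, one_pos, fun p hp _ => mt (hf p).mp hp⟩

/-- The exponent matrix of `x ^ l + y ^ m + y * z ^ n`, a Fermat term plus a chain; the singularity
`Q₁₀` is the case `(l, m, n) = (3, 4, 2)`. The row of `y ^ m` comes first because permuting the rows
of `C` permutes the entries of the weight `a` in `B_a = C * D`. -/
def fermatChain (l m n : ℕ) : Matrix (Fin 3) (Fin 3) ℕ :=
  !![0, m, 0; l, 0, 0; 0, 1, n]

theorem fC_fermatChain (l m n : ℕ) (v : Fin 3 → ℂ) :
    fC (fermatChain l m n) v = v 0 ^ l + v 1 ^ m + v 1 * v 2 ^ n := by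
  simp [fC, fermatChain, Fin.sum_univ_three, Fin.prod_univ_three, add_comm]

theorem fderiv_fC_fermatChain_eq_zero_iff (l m n : ℕ) (p : Fin 3 → ℂ) :
    fderiv ℂ (fC (fermatChain l m n)) p = 0 ↔
      l * p 0 ^ (l - 1) = 0 ∧ m * p 1 ^ (m - 1) + p 2 ^ n = 0 ∧
        p 1 * (n * p 2 ^ (n - 1)) = 0 := by
  have herase :
      (Finset.univ : Finset (Fin 3)).erase 0 = {1, 2} ∧
      (Finset.univ : Finset (Fin 3)).erase 1 = {0, 2} ∧
      (Finset.univ : Finset (Fin 3)).erase 2 = {0, 1} := by decide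
  simp [fderiv_fC_eq_zero_iff, Fin.forall_fin_succ, Fin.sum_univ_three, fermatChain, herase]

theorem fderiv_fC_fermatChain_eq_zero_iff_eq_zero {l m n : ℕ} (hl : 1 < l) (hm : 1 < m)
    (hn : n ≠ 0) (p : Fin 3 → ℂ) : fderiv ℂ (fC (fermatChain l m n)) p = 0 ↔ p = 0 := by
  have hl' : l - 1 ≠ 0 := by lia
  have hm' : m - 1 ≠ 0 := by lia
  rw [fderiv_fC_fermatChain_eq_zero_iff]
  refine ⟨fun ⟨hx, hy, hz⟩ => ?_, fun hp => by simp [hp, hl', hm', hn]⟩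
  have hp₀ : p 0 = 0 := by simpa [hl', Nat.ne_zero_of_lt hl] using hx
  have hp₁₂ : p 1 = 0 ↔ p 2 = 0 := by
    constructor <;> intro h <;> simpa [h, hm', hn, Nat.ne_zero_of_lt hm] using hy
  have hp₂ : p 2 = 0 := by
    rcases mul_eq_zero.mp hz with hp₁ | hpow
    · exact hp₁₂.mp hp₁
    · exact eq_zero_of_pow_eq_zero ((mul_eq_zero.mp hpow).resolve_left (by exact_mod_cast hn))
  ext i
  fin_cases i
  exacts [hp₀, hp₁₂.mpr hp₂, hp₂]

theorem stmt_8 :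
    ∃ C D : Matrix (Fin 3) (Fin 3) ℕ,
      |detZ D| = 1 ∧
      Bmat ![3, 8, 12] = C * D ∧
      (∀ j, (∑ i : Fin 3, D i j) = ![3, 8, 12] j) ∧
      (∃ σ : Equiv.Perm (Fin 3),
        ∀ x y z : ℂ, fC C (fun i => ![x, y, z] (σ i)) = x ^ 3 + y ^ 4 + y * z ^ 2) ∧
      IsolatedCriticalAtZero (fC C) := by
  have hB : Bmat ![3, 8, 12] = fermatChain 3 4 2 * !![1, 3, 4; 1, 2, 3; 1, 3, 5] := by decide
  have ha : ∀ j, ∑ i, !![1, 3, 4; 1, 2, 3; 1, 3, 5] i j = ![3, 8, 12] j := by decide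
  exact ⟨fermatChain 3 4 2, !![1, 3, 4; 1, 2, 3; 1, 3, 5],
    abs_detZ_eq_one_of_Bmat_eq_mul hB ha, hB, ha,
    ⟨1, fun x y z => fC_fermatChain 3 4 2 ![x, y, z]⟩,
    .of_fderiv_eq_zero_iff <|
      fderiv_fC_fermatChain_eq_zero_iff_eq_zero (by simp) (by simp) (by simp)⟩
end
end

section
/- For the weight a = (4,5,10) (the weight of the W₁₂-singularity), there exist 3×3 matrices C and D with non-negative integer entries such that |det D| = 1, B_a = C·D, (4,5,10) = (1,1,1)·D, f_C(x,y,z) = x⁵ + y²z + z² after a permutation of the variables (x,y,z), and f_C has an isolated critical point at the origin of ℂ³ (all partial derivatives of f_C vanish at 0, and there is a punctured neighborhood of 0 containing no critical point of f_C). In particular, of the two normal forms x⁵ + y⁴ + z² and x⁵ + y²z + z² of the self-dual singularity W₁₂, only the latter arises as f_C. -/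
open Matrix BigOperators

noncomputable section

/-!
As a polynomial, `f_C` determines the rows of `C` up to order, hence also `|det C|`. If
`B_a = C * D`, then `det C` divides `det B_a = 1 + a₁ + a₂ + a₃`, which for `a = (4, 5, 10)` is
`20`. The exponent matrix of `x ^ 5 + y ^ 4 + z ^ 2` has determinant `5 * 4 * 2 = 40`, so that
normal form cannot occur. That of `x ^ 5 + y ^ 2 * z + z ^ 2` has determinant `±20`, and its rows
can be ordered so that the quotient `D` is integral, non-negative and unimodular.
-/

section MonomialSum

variable {ι n R : Type*} [Fintype ι]

/-- The sum of the monomials with exponent vectors `s i`, all with coefficient `1`. When `s` lists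
the rows of an exponent matrix `C`, this is the polynomial underlying `f_C`. -/
def monomialSum (R : Type*) [CommSemiring R] (s : ι → n →₀ ℕ) : MvPolynomial n R :=
  ∑ i, MvPolynomial.monomial (s i) 1

lemma coeff_monomialSum [CommSemiring R] (s : ι → n →₀ ℕ) (e : n →₀ ℕ) :
    (monomialSum R s).coeff e = (Nat.card {i // s i = e} : R) := by
  classical
  simp only [monomialSum, MvPolynomial.coeff_sum, MvPolynomial.coeff_monomial, Finset.sum_boole,
    Nat.card_eq_fintype_card, Fintype.card_subtype]

lemma exists_perm_of_monomialSum_eq [CommSemiring R] [CharZero R] {s t : ι → n →₀ ℕ}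
    (h : monomialSum R s = monomialSum R t) : ∃ τ : Equiv.Perm ι, ∀ i, s i = t (τ i) := by
  have hcard (e : n →₀ ℕ) : Nat.card {i // s i = e} = Nat.card {i // t i = e} := by
    simpa only [coeff_monomialSum, Nat.cast_inj] using congrArg (MvPolynomial.coeff e) h
  have fiberEquiv (e : n →₀ ℕ) : {i // s i = e} ≃ {i // t i = e} :=
    (Finite.card_eq.mp (hcard e)).some
  exact ⟨.ofFiberEquiv fiberEquiv, fun i => (Equiv.ofFiberEquiv_map fiberEquiv i).symm⟩

lemma exists_perm_of_sum_prod_pow_eq [Fintype n] [CommRing R] [IsDomain R] [CharZero R]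
    {C E : Matrix ι n ℕ} (h : ∀ v : n → R, ∑ i, ∏ j, v j ^ C i j = ∑ i, ∏ j, v j ^ E i j) :
    ∃ τ : Equiv.Perm ι, C = E.submatrix τ id := by
  have infinite : Infinite R := CharZero.infinite R
  let rows (M : Matrix ι n ℕ) (i : ι) : n →₀ ℕ := Finsupp.equivFunOnFinite.symm (M.row i)
  have hrows : monomialSum R (rows C) = monomialSum R (rows E) := MvPolynomial.funext fun v => by
    simpa [monomialSum, MvPolynomial.eval_monomial, Finsupp.prod_fintype, rows] using h v
  obtain ⟨τ, hτ⟩ := exists_perm_of_monomialSum_eq hrows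
  exact ⟨τ, Matrix.ext fun i j => DFunLike.congr_fun (hτ i) j⟩

end MonomialSum

lemma fC_comp_perm (C : Matrix (Fin 3) (Fin 3) ℕ) (σ : Equiv.Perm (Fin 3)) (v : Fin 3 → ℂ) :
    fC C (v ∘ σ) = fC (C.submatrix id σ.symm) v :=
  Finset.sum_congr rfl fun i _ => by
    simpa using Equiv.prod_comp σ fun j => v j ^ C i (σ.symm j)

lemma fC_diagonal (e : Fin 3 → ℕ) (v : Fin 3 → ℂ) :
    fC (Matrix.diagonal e) v = ∑ i, v i ^ e i := by
  simp [fC, Matrix.diagonal_apply, pow_ite]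

lemma detZ_mul (C D : Matrix (Fin 3) (Fin 3) ℕ) : detZ (C * D) = detZ C * detZ D := by
  simp only [detZ, ← Matrix.det_mul]
  exact congrArg _ (Matrix.map_mul (f := Nat.castRingHom ℤ))

lemma detZ_diagonal (e : Fin 3 → ℕ) : detZ (Matrix.diagonal e) = ∏ i, (e i : ℤ) := by
  simp [detZ, Matrix.diagonal_map]

lemma detZ_Bmat (a : Fin 3 → ℕ) : detZ (Bmat a) = 1 + ∑ i, (a i : ℤ) := by
  simp only [detZ, Matrix.det_fin_three, Matrix.map_apply, Bmat, ↓reduceIte, Nat.cast_add,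
    Nat.cast_one, Fin.reduceEq, add_zero, zero_ne_one, one_ne_zero, Fin.sum_univ_three]
  ring

lemma abs_detZ_submatrix (C : Matrix (Fin 3) (Fin 3) ℕ) (τ σ : Equiv.Perm (Fin 3)) :
    |detZ (C.submatrix τ σ)| = |detZ C| := by
  rw [detZ, ← Matrix.submatrix_map, Matrix.abs_det_submatrix_equiv_equiv, detZ]

lemma abs_detZ_eq_of_fC_comp_perm_eq {C E : Matrix (Fin 3) (Fin 3) ℕ} {σ : Equiv.Perm (Fin 3)}
    (h : ∀ v, fC C (v ∘ σ) = fC E v) : |detZ C| = |detZ E| := by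
  obtain ⟨τ, hτ⟩ : ∃ τ : Equiv.Perm (Fin 3), C.submatrix id σ.symm = E.submatrix τ id :=
    exists_perm_of_sum_prod_pow_eq fun v => (fC_comp_perm C σ v).symm.trans (h v)
  calc |detZ C| = |detZ (C.submatrix id σ.symm)| := (abs_detZ_submatrix C 1 σ.symm).symm
    _ = |detZ (E.submatrix τ id)| := by rw [hτ]
    _ = |detZ E| := abs_detZ_submatrix E τ 1

lemma detZ_dvd_of_Bmat_eq_mul {a : Fin 3 → ℕ} {C D E : Matrix (Fin 3) (Fin 3) ℕ}
    {σ : Equiv.Perm (Fin 3)} (hB : Bmat a = C * D) (hf : ∀ v, fC C (v ∘ σ) = fC E v) :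
    detZ E ∣ 1 + ∑ i, (a i : ℤ) := by
  rw [← detZ_Bmat, hB, detZ_mul, ← abs_dvd, ← abs_detZ_eq_of_fC_comp_perm_eq hf, abs_dvd]
  exact dvd_mul_right _ _

lemma sum_smul_proj_eq_zero_iff {ι R : Type*} [Fintype ι] [CommSemiring R]
    [TopologicalSpace R] [IsTopologicalSemiring R] (g : ι → R) :
    ∑ i, g i • ContinuousLinearMap.proj (R := R) (φ := fun _ : ι => R) i = 0 ↔ g = 0 := by
  classical
  refine ⟨fun h => funext fun i => ?_, fun h => by ext v; simp [h]⟩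
  simpa [Pi.single_apply] using DFunLike.congr_fun h (Pi.single i 1)

/-- The exponent matrix of `x ^ l + y ^ m * z + z ^ n`, a Fermat monomial plus a chain. The rows
are ordered so that `B_a = C * D` is solvable for `a = (4, 5, 10)` and `(l, m, n) = (5, 2, 2)`. -/
def chainMatrix (l m n : ℕ) : Matrix (Fin 3) (Fin 3) ℕ :=
  !![l, 0, 0; 0, 0, n; 0, m, 1]

section ChainMatrix

variable {l m n : ℕ}

lemma fC_chainMatrix (v : Fin 3 → ℂ) :
    fC (chainMatrix l m n) v = v 0 ^ l + v 1 ^ m * v 2 + v 2 ^ n := by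
  simp only [fC, chainMatrix, of_apply, cons_val', cons_val_fin_one, cons_val_zero, cons_val_one,
    cons_val, Fin.sum_univ_three, Fin.prod_univ_three, pow_zero, mul_one, one_mul, pow_one]
  ring

lemma hasFDerivAt_fC_chainMatrix (p : Fin 3 → ℂ) :
    HasFDerivAt (fC (chainMatrix l m n))
      (∑ i, ![l * p 0 ^ (l - 1), m * p 1 ^ (m - 1) * p 2, p 1 ^ m + n * p 2 ^ (n - 1)] i •
        ContinuousLinearMap.proj (R := ℂ) (φ := fun _ : Fin 3 => ℂ) i) p := by
  have coord (i : Fin 3) := hasFDerivAt_apply (𝕜 := ℂ) i p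
  have hsum := (((coord 0).pow l).add (((coord 1).pow m).mul (coord 2))).add ((coord 2).pow n)
  refine (hsum.congr_fderiv ?_).congr_of_eventuallyEq (.of_forall fC_chainMatrix)
  ext v
  simp only [nsmul_eq_mul, _root_.add_apply, _root_.smul_apply, ContinuousLinearMap.proj_apply,
    smul_eq_mul, Fin.sum_univ_three, cons_val_zero, cons_val_one, cons_val]
  ring

lemma fderiv_fC_chainMatrix_eq_zero_iff (hl : 2 ≤ l) (hm : m ≠ 0) (hn : 2 ≤ n)
    (p : Fin 3 → ℂ) : fderiv ℂ (fC (chainMatrix l m n)) p = 0 ↔ p = 0 := by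
  have hl_sub : l - 1 ≠ 0 := by omega
  have hn_sub : n - 1 ≠ 0 := by omega
  rw [(hasFDerivAt_fC_chainMatrix p).fderiv, sum_smul_proj_eq_zero_iff]
  constructor
  · intro h
    have hx : p 0 = 0 := by
      simpa [hl_sub, show l ≠ 0 by omega] using congrFun h 0
    have hdy : m * p 1 ^ (m - 1) * p 2 = 0 := congrFun h 1
    have hdz : p 1 ^ m + n * p 2 ^ (n - 1) = 0 := congrFun h 2
    have hy : p 1 = 0 := by
      rcases mul_eq_zero.mp hdy with hy | hz
      · exact eq_zero_of_pow_eq_zero (by simpa [hm] using hy)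
      · simpa [hz, hn_sub, hm] using hdz
    have hz : p 2 = 0 := by
      simpa [hy, hm, hn_sub, show n ≠ 0 by omega] using hdz
    funext i
    fin_cases i
    exacts [hx, hy, hz]
  · rintro rfl
    funext i
    fin_cases i <;> simp [hl_sub, hm, hn_sub]

lemma isolatedCriticalAtZero_fC_chainMatrix (hl : 2 ≤ l) (hm : m ≠ 0) (hn : 2 ≤ n) :
    IsolatedCriticalAtZero (fC (chainMatrix l m n)) :=
  ⟨(fderiv_fC_chainMatrix_eq_zero_iff hl hm hn 0).mpr rfl, 1, one_pos,
    fun p hp _ hcrit => hp ((fderiv_fC_chainMatrix_eq_zero_iff hl hm hn p).mp hcrit)⟩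

end ChainMatrix

theorem stmt_12_general :
    (∃ C D : Matrix (Fin 3) (Fin 3) ℕ,
      |detZ D| = 1 ∧
      Bmat ![4, 5, 10] = C * D ∧
      (∀ j, (∑ i : Fin 3, D i j) = ![4, 5, 10] j) ∧
      (∃ σ : Equiv.Perm (Fin 3),
        ∀ x y z : ℂ, fC C (fun i => ![x, y, z] (σ i)) = x ^ 5 + y ^ 2 * z + z ^ 2) ∧
      IsolatedCriticalAtZero (fC C)) ∧
    (∀ C D : Matrix (Fin 3) (Fin 3) ℕ,
      Bmat ![4, 5, 10] = C * D →
      ¬ ∃ σ : Equiv.Perm (Fin 3),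
          ∀ x y z : ℂ, fC C (fun i => ![x, y, z] (σ i)) = x ^ 5 + y ^ 4 + z ^ 2) := by
  refine ⟨⟨chainMatrix 5 2 2, !![1, 1, 2; 1, 1, 3; 2, 3, 5], ?unimodular, ?factorization,
    ?columnSums, ⟨1, fun x y z => fC_chainMatrix ![x, y, z]⟩,
    isolatedCriticalAtZero_fC_chainMatrix (by norm_num) two_ne_zero le_rfl⟩, ?fermat⟩
  case unimodular => simp [detZ, Matrix.det_fin_three]
  case factorization => decide
  case columnSums => decide
  case fermat =>
    rintro C D hB ⟨σ, hf⟩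
    have hfermat (v : Fin 3 → ℂ) : fC C (v ∘ σ) = fC (Matrix.diagonal ![5, 4, 2]) v := by
      rw [fC_diagonal, Fin.sum_univ_three, ← FinVec.etaExpand_eq v]
      exact hf (v 0) (v 1) (v 2)
    have forty_dvd_twenty : (40 : ℤ) ∣ 20 := by
      simpa [detZ_diagonal, Fin.prod_univ_three, Fin.sum_univ_three] using
        detZ_dvd_of_Bmat_eq_mul hB hfermat
    norm_num at forty_dvd_twenty

theorem stmt_12 :
    (∃ C D : Matrix (Fin 3) (Fin 3) ℕ,
      |detZ D| = 1 ∧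
      Bmat ![4, 5, 10] = C * D ∧
      (∀ j, (∑ i : Fin 3, D i j) = ![4, 5, 10] j) ∧
      (∃ σ : Equiv.Perm (Fin 3),
        ∀ x y z : ℂ, fC C (fun i => ![x, y, z] (σ i)) = x ^ 5 + y ^ 2 * z + z ^ 2) ∧
      IsolatedCriticalAtZero (fC C)) ∧
    (∀ C D : Matrix (Fin 3) (Fin 3) ℕ,
      |detZ D| = 1 →
      Bmat ![4, 5, 10] = C * D →
      (∀ j, (∑ i : Fin 3, D i j) = ![4, 5, 10] j) →
      IsolatedCriticalAtZero (fC C) →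
      ¬ ∃ σ : Equiv.Perm (Fin 3),
          ∀ x y z : ℂ, fC C (fun i => ![x, y, z] (σ i)) = x ^ 5 + y ^ 4 + z ^ 2) :=
  ⟨stmt_12_general.1, fun C D _ hB _ _ => stmt_12_general.2 C D hB⟩
end
end
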